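/- Let E be a real inner product space and F : E → E a continuous linear map that is skew-adjoint, i.e. ⟨F x, y⟩ = -⟨x, F y⟩ for all x, y ∈ E. Then for every θ ∈ E and real t, the five-stage scheme with coefficients β = (1, 1, 1/2, 1/6, 1/24, 1/144) satisfies the exact energy identity ‖θ + t F θ + (t²/2) F² θ + (t³/6) F³ θ + (t⁴/24) F⁴ θ + (t⁵/144) F⁵ θ‖² = ‖θ‖² - (t⁸/1728) ‖F⁴ θ‖² + (t^{10}/20736) ‖F⁵ θ‖². -/

import Mathlib

open RealInnerProductSpace

/-!
On a Fourier mode a skew-adjoint `F` acts as multiplication by `iω`, so a scheme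
`u ↦ p(F) u` multiplies the energy of the mode by `|p(iω)|² = p(-iω) p(iω)`. This is an even
polynomial in `iω`, hence of the form `S(ω²)`, and `ω²` is the symbol of `-F²`. No spectral theory
is needed to make this rigorous: the adjoint of `p(F)` is `p(-F)`, so
`⟨p(F) x, p(F) x⟩ = ⟨x, S(-F²) x⟩`, and `⟨x, (-F²)ᵏ x⟩ = ⟨Fᵏ x, Fᵏ x⟩` turns this into a
combination of energies whose weights are the coefficients of `S`.
For scheme 5, `S = 1 - X⁴/1728 + X⁵/20736`.
-/

section AdjointPair

open LinearMap Polynomial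

theorem isAdjointPair_pow {R M N : Type*} [CommSemiring R] [AddCommMonoid M] [Module R M]
    [AddCommMonoid N] [Module R N] {I : R →+* R} {B : M →ₗ[R] M →ₛₗ[I] N} {f g : Module.End R M}
    (h : IsAdjointPair B B f g) (k : ℕ) :
    IsAdjointPair B B (f ^ k : Module.End R M) (g ^ k : Module.End R M) := by
  induction k with
  | zero => exact isAdjointPair_one
  | succ k ih =>
    rw [pow_succ f, pow_succ' g]
    exact ih.mul h

theorem isAdjointPair_aeval {R M N : Type*} [CommSemiring R] [AddCommMonoid M] [Module R M]
    [AddCommMonoid N] [Module R N] {B : M →ₗ[R] M →ₗ[R] N} {f g : Module.End R M}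
    (h : IsAdjointPair B B f g) (p : R[X]) :
    IsAdjointPair B B (aeval f p) (aeval g p) := by
  induction p using Polynomial.induction_on' with
  | add p q hp hq =>
    rw [map_add, map_add]
    exact hp.add hq
  | monomial k c =>
    intro x y
    simp only [← smul_X_eq_monomial, map_smul, map_pow, aeval_X, LinearMap.smul_apply,
      isAdjointPair_pow h k x y]

end AdjointPair

section SkewAdjoint

open LinearMap Polynomial

variable {R M N : Type*} [CommRing R] [AddCommGroup M] [Module R M] [AddCommGroup N] [Module R N]
  {B : M →ₗ[R] M →ₗ[R] N} {F : Module.End R M}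

theorem apply_neg_sq_pow_of_isSkewAdjoint (hF : B.IsSkewAdjoint F) (k : ℕ) (x y : M) :
    B x (((-F ^ 2) ^ k) y) = B ((F ^ k) x) ((F ^ k) y) := by
  have hFk : IsAdjointPair B B (F ^ k : Module.End R M) ((-F) ^ k : Module.End R M) :=
    isAdjointPair_pow (g := -F) hF k
  have factor : (-F ^ 2) ^ k = (-F) ^ k * F ^ k := by
    rw [← (Commute.neg_left (Commute.refl F)).mul_pow, neg_mul, sq]
  rw [factor, Module.End.mul_apply, hFk]

theorem apply_aeval_aeval_of_isSkewAdjoint (hF : B.IsSkewAdjoint F) {p S : R[X]}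
    (hS : p.comp (-X) * p = S.comp (-X ^ 2)) (x y : M) :
    B (aeval F p x) (aeval F p y) = B x (aeval (-F ^ 2) S y) :=
  calc
    B (aeval F p x) (aeval F p y) = B x (aeval (-F) p (aeval F p y)) :=
      isAdjointPair_aeval (g := -F) hF p x _
    _ = B x (aeval F (p.comp (-X) * p) y) := by
      simp only [map_mul, aeval_comp, map_neg, aeval_X, Module.End.mul_apply]
    _ = B x (aeval (-F ^ 2) S y) := by
      simp only [hS, aeval_comp, map_neg, map_pow, aeval_X]

end SkewAdjoint

section Scheme5

open LinearMap Polynomial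

variable (K : Type*) [Field K]

/-- The stability polynomial `p` of scheme 5: one step of size `t` for the linear equation
`u' = F u` is `u ↦ p(t F) u`. -/
noncomputable def scheme5StabilityPolynomial : K[X] :=
  1 + X + (1 / 2 : K) • X ^ 2 + (1 / 6 : K) • X ^ 3 + (1 / 24 : K) • X ^ 4 + (1 / 144 : K) • X ^ 5

/-- The energy amplification of scheme 5 on a mode of frequency `ω`, that is `|p(iω)|²` for the
stability polynomial `p`, written as a polynomial in `ω²`. -/
noncomputable def scheme5EnergyPolynomial : K[X] :=
  1 - (1 / 1728 : K) • X ^ 4 + (1 / 20736 : K) • X ^ 5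

theorem scheme5StabilityPolynomial_comp_neg_X_mul_self [CharZero K] :
    (scheme5StabilityPolynomial K).comp (-X) * scheme5StabilityPolynomial K =
      (scheme5EnergyPolynomial K).comp (-X ^ 2) := by
  refine Polynomial.funext fun z ↦ ?_
  simp only [scheme5StabilityPolynomial, scheme5EnergyPolynomial, eval_mul, eval_comp, eval_add,
    eval_sub, eval_neg, eval_smul, eval_pow, eval_X, eval_one, smul_eq_mul]
  field_simp
  ring

variable {K} {V : Type*} [AddCommGroup V] [Module K V]

theorem aeval_smul_scheme5StabilityPolynomial (F : Module.End K V) (t : K) (θ : V) :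
    aeval (t • F) (scheme5StabilityPolynomial K) θ =
      θ + t • F θ + (t ^ 2 / 2) • (F ^ 2) θ + (t ^ 3 / 6) • (F ^ 3) θ
        + (t ^ 4 / 24) • (F ^ 4) θ + (t ^ 5 / 144) • (F ^ 5) θ := by
  simp only [scheme5StabilityPolynomial, map_add, map_one, map_smul, map_pow, aeval_X,
    _root_.smul_pow, LinearMap.add_apply, LinearMap.smul_apply, Module.End.one_apply, smul_smul,
    one_div_mul_eq_div]

theorem apply_aeval_neg_sq_scheme5EnergyPolynomial {B : LinearMap.BilinForm K V}
    {F : Module.End K V} (hF : B.IsSkewAdjoint F) (x y : V) :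
    B x (aeval (-F ^ 2) (scheme5EnergyPolynomial K) y) =
      B x y - 1 / 1728 * B ((F ^ 4) x) ((F ^ 4) y) + 1 / 20736 * B ((F ^ 5) x) ((F ^ 5) y) := by
  simp only [scheme5EnergyPolynomial, map_add, map_sub, map_one, map_smul, map_pow, aeval_X,
    LinearMap.add_apply, LinearMap.sub_apply, LinearMap.smul_apply, Module.End.one_apply,
    apply_neg_sq_pow_of_isSkewAdjoint hF, smul_eq_mul]

theorem scheme5_skew_adjoint_energy_general [CharZero K] (B : LinearMap.BilinForm K V)
    (F : Module.End K V) (hF : B.IsSkewAdjoint F) (θ : V) (t : K) (u : V)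
    (hu : u = θ + t • F θ + (t ^ 2 / 2) • (F ^ 2) θ + (t ^ 3 / 6) • (F ^ 3) θ
      + (t ^ 4 / 24) • (F ^ 4) θ + (t ^ 5 / 144) • (F ^ 5) θ) :
    B u u = B θ θ - t ^ 8 / 1728 * B ((F ^ 4) θ) ((F ^ 4) θ)
      + t ^ 10 / 20736 * B ((F ^ 5) θ) ((F ^ 5) θ) := by
  have htF : B.IsSkewAdjoint (t • F : Module.End K V) := by
    rw [← mem_skewAdjointSubmodule] at hF ⊢
    exact Submodule.smul_mem _ t hF
  rw [hu, ← aeval_smul_scheme5StabilityPolynomial, apply_aeval_aeval_of_isSkewAdjoint htF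
      (scheme5StabilityPolynomial_comp_neg_X_mul_self K),
    apply_aeval_neg_sq_scheme5EnergyPolynomial htF]
  simp only [_root_.smul_pow, LinearMap.smul_apply, map_smul, smul_eq_mul]
  ring

end Scheme5

/-- "Scheme 5" with coefficients `(1, 1, 1/2, 1/6, 1/24, 1/144)` for a skew-adjoint
operator: exact energy identity
`‖θ + t F θ + (t²/2) F² θ + (t³/6) F³ θ + (t⁴/24) F⁴ θ + (t⁵/144) F⁵ θ‖² =
‖θ‖² - (t⁸/1728) ‖F⁴ θ‖² + (t¹⁰/20736) ‖F⁵ θ‖²`. -/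
theorem scheme5_skew_adjoint_energy
    {E : Type*} [NormedAddCommGroup E] [InnerProductSpace ℝ E]
    (F : E →L[ℝ] E) (hF : ∀ x y : E, ⟪F x, y⟫ = -⟪x, F y⟫)
    (θ : E) (t : ℝ) :
    ‖θ + t • F θ + (t ^ 2 / 2) • (F ^ 2) θ + (t ^ 3 / 6) • (F ^ 3) θ
        + (t ^ 4 / 24) • (F ^ 4) θ + (t ^ 5 / 144) • (F ^ 5) θ‖ ^ 2 =
      ‖θ‖ ^ 2 - t ^ 8 / 1728 * ‖(F ^ 4) θ‖ ^ 2 + t ^ 10 / 20736 * ‖(F ^ 5) θ‖ ^ 2 := by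
  simp only [← real_inner_self_eq_norm_sq]
  exact scheme5_skew_adjoint_energy_general (innerₗ E) F.toLinearMap
    (fun x y ↦ (hF x y).trans (inner_neg_right x (F y)).symm) θ t _ rfl
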